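/- arXiv:2511.13522 — 2 statements merged into one kernel-verified Lean document; each statement's English description precedes it below -/
import Mathlib

section
/- Let F_x, F_y, F_z, F_w, c_r, C_α be real numbers with F_z > 0 and C_α < 0. Then the second-order cone inequality −F_x + F_w − (c_r + C_α)·F_z ≥ sqrt((2·F_y)² + (F_x − F_w + (c_r − C_α)·F_z)²) holds if and only if F_x ≤ F_w − c_r·F_z + F_y²/(C_α·F_z). -/
/-!
Put `a = -(Cα * Fz) > 0` and `b = Fw - Fx - cr * Fz`. Since `(a + b) ^ 2 - (a - b) ^ 2 = 4 * a * b`,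
the conic inequality `√((2 * Fy) ^ 2 + (a - b) ^ 2) ≤ a + b` is the rotated second-order cone
condition `Fy ^ 2 ≤ a * b` with `a, b ≥ 0`, and dividing by `a` gives the force bound.
-/

theorem sqrt_two_mul_sq_add_sub_sq_le_add_iff {a b y : ℝ} :
    √((2 * y) ^ 2 + (a - b) ^ 2) ≤ a + b ↔ 0 ≤ a ∧ 0 ≤ b ∧ y ^ 2 ≤ a * b := by
  have sq_le_iff : (2 * y) ^ 2 + (a - b) ^ 2 ≤ (a + b) ^ 2 ↔ y ^ 2 ≤ a * b := by
    constructor <;> intro h <;> linarith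
  rw [Real.sqrt_le_iff, sq_le_iff]
  constructor
  · rintro ⟨hab, sq_le⟩
    have mul_ab_nonneg : 0 ≤ a * b := (sq_nonneg y).trans sq_le
    rcases mul_nonneg_iff.mp mul_ab_nonneg with ⟨ha, hb⟩ | ⟨ha, hb⟩
    · exact ⟨ha, hb, sq_le⟩
    · exact ⟨by linarith, by linarith, sq_le⟩
  · rintro ⟨ha, hb, sq_le⟩
    exact ⟨add_nonneg ha hb, sq_le⟩

theorem sqrt_two_mul_sq_add_sub_sq_le_add_iff_div_le {a b y : ℝ} (ha : 0 < a) :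
    √((2 * y) ^ 2 + (a - b) ^ 2) ≤ a + b ↔ y ^ 2 / a ≤ b := by
  rw [sqrt_two_mul_sq_add_sub_sq_le_add_iff, ← div_le_iff₀' ha]
  constructor
  · rintro ⟨-, -, div_le⟩
    exact div_le
  · intro div_le
    have hb : 0 ≤ b := (div_nonneg (sq_nonneg y) ha.le).trans div_le
    exact ⟨ha.le, hb, div_le⟩

/-- Second-order conic reformulation of the powertrain force constraint (27)→(28). -/
theorem powertrain_soc_iff (Fx Fy Fz Fw cr Cα : ℝ) (hFz : Fz > 0) (hCα : Cα < 0) :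
    (-Fx + Fw - (cr + Cα) * Fz ≥
        Real.sqrt ((2 * Fy) ^ 2 + (Fx - Fw + (cr - Cα) * Fz) ^ 2)) ↔
      Fx ≤ Fw - cr * Fz + Fy ^ 2 / (Cα * Fz) := by
  have stiffness_pos : 0 < -(Cα * Fz) := neg_pos.mpr (mul_neg_of_neg_of_pos hCα hFz)
  have sum_eq : -Fx + Fw - (cr + Cα) * Fz = -(Cα * Fz) + (Fw - Fx - cr * Fz) := by ring
  have diff_eq : Fx - Fw + (cr - Cα) * Fz = -(Cα * Fz) - (Fw - Fx - cr * Fz) := by ring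
  rw [ge_iff_le, sum_eq, diff_eq, sqrt_two_mul_sq_add_sub_sq_le_add_iff_div_le stiffness_pos,
    div_neg]
  constructor <;> intro h <;> linarith
end

section
/- Let μ_x > 0, μ_y > 0, F_nom > 0 and γ ≤ 0 be real numbers, and let h(F_z, ΔF) = (γ/(2·F_nom))·(F_z² + ΔF²) + (1 − γ)·F_z. Then the set {(F_x, F_y, F_z, ΔF, F⋆) ∈ ℝ⁵ : sqrt((F_x/μ_x)² + (F_y/μ_y)²) ≤ F⋆ ∧ F⋆ ≤ h(F_z, ΔF)} is convex. -/
/-!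
The first constraint is a second-order cone constraint `‖A q‖ ≤ F⋆` with `A` linear, and a norm
composed with a linear map is convex. In the second one `γ / (2 F_nom) ≤ 0` multiplies the convex
function `F_z² + ΔF²`, so the upper bound on the linear function `F⋆` is concave.
-/

section OrderedModule

variable {𝕜 E β : Type*} [AddCommMonoid E] [SMul 𝕜 E] {s : Set E} {f g : E → β}

theorem convex_setOf_le_of_convexOn_of_concaveOn [Semiring 𝕜] [PartialOrder 𝕜]
    [AddCommMonoid β] [PartialOrder β] [IsOrderedAddMonoid β] [Module 𝕜 β] [PosSMulMono 𝕜 β]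
    (hf : ConvexOn 𝕜 s f) (hg : ConcaveOn 𝕜 s g) : Convex 𝕜 {x ∈ s | f x ≤ g x} := by
  rintro x ⟨hxs, hx⟩ y ⟨hys, hy⟩ a b ha hb hab
  refine ⟨hf.1 hxs hys ha hb hab, ?_⟩
  calc
    f (a • x + b • y) ≤ a • f x + b • f y := hf.2 hxs hys ha hb hab
    _ ≤ a • g x + b • g y := by gcongr
    _ ≤ g (a • x + b • y) := hg.2 hxs hys ha hb hab

theorem concaveOn_smul_of_nonpos [CommRing 𝕜] [PartialOrder 𝕜] [IsOrderedRing 𝕜]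
    [AddCommGroup β] [PartialOrder β] [IsOrderedAddMonoid β] [Module 𝕜 β] [PosSMulMono 𝕜 β]
    {c : 𝕜} (hc : c ≤ 0) (hf : ConvexOn 𝕜 s f) : ConcaveOn 𝕜 s fun x => c • f x := by
  simpa only [Pi.neg_def, neg_smul, neg_neg] using (hf.smul (neg_nonneg.2 hc)).neg

end OrderedModule

section Norm

variable {E V : Type*} [AddCommMonoid E] [Module ℝ E] [SeminormedAddCommGroup V] [NormedSpace ℝ V]

theorem convex_setOf_norm_linearMap_le (A : E →ₗ[ℝ] V) (t : E →ₗ[ℝ] ℝ) :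
    Convex ℝ {x | ‖A x‖ ≤ t x} := by
  have norm_convex : ConvexOn ℝ Set.univ fun x => ‖A x‖ := convexOn_univ_norm.comp_linearMap A
  simpa only [Set.mem_univ, true_and] using
    convex_setOf_le_of_convexOn_of_concaveOn norm_convex (t.concaveOn convex_univ)

theorem concaveOn_mul_norm_sq_linearMap_add (A : E →ₗ[ℝ] V) (ℓ : E →ₗ[ℝ] ℝ) {c : ℝ} (hc : c ≤ 0) :
    ConcaveOn ℝ Set.univ fun x => c * ‖A x‖ ^ 2 + ℓ x :=
  have norm_sq_convex : ConvexOn ℝ Set.univ fun x => ‖A x‖ ^ 2 :=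
    (convexOn_univ_norm.pow (fun _ _ => norm_nonneg _) 2).comp_linearMap A
  (concaveOn_smul_of_nonpos hc norm_sq_convex).add (ℓ.concaveOn convex_univ)

theorem convex_setOf_le_mul_norm_sq_linearMap_add (A : E →ₗ[ℝ] V) (t ℓ : E →ₗ[ℝ] ℝ) {c : ℝ}
    (hc : c ≤ 0) : Convex ℝ {x | t x ≤ c * ‖A x‖ ^ 2 + ℓ x} := by
  simpa only [Set.mem_univ, true_and] using
    convex_setOf_le_of_convexOn_of_concaveOn (t.convexOn convex_univ)
      (concaveOn_mul_norm_sq_linearMap_add A ℓ hc)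

end Norm

section EuclideanPair

variable {E : Type*} [AddCommMonoid E] [Module ℝ E]

/-- The linear map `x ↦ (ℓ x, m x)` into the Euclidean plane, which writes `√(ℓ x ^ 2 + m x ^ 2)` as
the norm of a linear map. The plane is `WithLp 2 (ℝ × ℝ)` because `ℝ × ℝ` carries the sup norm. -/
def euclideanPair (ℓ m : E →ₗ[ℝ] ℝ) : E →ₗ[ℝ] WithLp 2 (ℝ × ℝ) :=
  (WithLp.linearEquiv 2 ℝ (ℝ × ℝ)).symm.toLinearMap ∘ₗ ℓ.prod m

theorem norm_euclideanPair (ℓ m : E →ₗ[ℝ] ℝ) (x : E) :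
    ‖euclideanPair ℓ m x‖ = √(ℓ x ^ 2 + m x ^ 2) := by
  simp [euclideanPair, WithLp.prod_norm_eq_of_L2]

theorem norm_sq_euclideanPair (ℓ m : E →ₗ[ℝ] ℝ) (x : E) :
    ‖euclideanPair ℓ m x‖ ^ 2 = ℓ x ^ 2 + m x ^ 2 := by
  rw [norm_euclideanPair, Real.sq_sqrt (by positivity)]

end EuclideanPair

/-- The feasible set of the load-dependent axle friction-ellipse model
(constraints (21)–(22)) is convex. Coordinates: (F_x, F_y, F_z, ΔF, F⋆). -/
theorem friction_ellipse_load_dependent_convex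
    (μx μy Fnom γ : ℝ) (hμx : μx > 0) (hμy : μy > 0) (hF : Fnom > 0) (hγ : γ ≤ 0) :
    Convex ℝ {q : ℝ × ℝ × ℝ × ℝ × ℝ |
      Real.sqrt ((q.1 / μx) ^ 2 + (q.2.1 / μy) ^ 2) ≤ q.2.2.2.2 ∧
      q.2.2.2.2 ≤ γ / (2 * Fnom) * (q.2.2.1 ^ 2 + q.2.2.2.1 ^ 2)
        + (1 - γ) * q.2.2.1} := by
  let Fx : ℝ × ℝ × ℝ × ℝ × ℝ →ₗ[ℝ] ℝ := .fst ℝ ℝ _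
  let Fy : ℝ × ℝ × ℝ × ℝ × ℝ →ₗ[ℝ] ℝ := .fst ℝ ℝ _ ∘ₗ .snd ℝ ℝ _
  let Fz : ℝ × ℝ × ℝ × ℝ × ℝ →ₗ[ℝ] ℝ := .fst ℝ ℝ _ ∘ₗ .snd ℝ ℝ _ ∘ₗ .snd ℝ ℝ _
  let ΔF : ℝ × ℝ × ℝ × ℝ × ℝ →ₗ[ℝ] ℝ :=
    .fst ℝ ℝ ℝ ∘ₗ .snd ℝ ℝ _ ∘ₗ .snd ℝ ℝ _ ∘ₗ .snd ℝ ℝ _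
  let Fstar : ℝ × ℝ × ℝ × ℝ × ℝ →ₗ[ℝ] ℝ :=
    .snd ℝ ℝ ℝ ∘ₗ .snd ℝ ℝ _ ∘ₗ .snd ℝ ℝ _ ∘ₗ .snd ℝ ℝ _
  have curvature_nonpos : γ / (2 * Fnom) ≤ 0 :=
    div_nonpos_of_nonpos_of_nonneg hγ (by positivity)
  have ellipse_convex : Convex ℝ {q | √((Fx q / μx) ^ 2 + (Fy q / μy) ^ 2) ≤ Fstar q} := by
    simpa only [norm_euclideanPair, LinearMap.smul_apply, smul_eq_mul, inv_mul_eq_div] using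
      convex_setOf_norm_linearMap_le (euclideanPair (μx⁻¹ • Fx) (μy⁻¹ • Fy)) Fstar
  have capacity_convex : Convex ℝ
      {q | Fstar q ≤ γ / (2 * Fnom) * (Fz q ^ 2 + ΔF q ^ 2) + (1 - γ) * Fz q} := by
    simpa only [norm_sq_euclideanPair, LinearMap.smul_apply, smul_eq_mul] using
      convex_setOf_le_mul_norm_sq_linearMap_add
        (euclideanPair Fz ΔF) Fstar ((1 - γ) • Fz) curvature_nonpos
  exact ellipse_convex.inter capacity_convex
end
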